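/- (Theorem 2, non-convex convergence of FedExP, with explicit constants.) Let F_1, …, F_M : ℝ^d → ℝ be differentiable and L-smooth (possibly non-convex), let F = (1/M)Σ_{i=1}^M F_i, let F* = inf F > −∞, and assume the global gradient variance bound (1/M) Σ_{i=1}^M ‖∇F_i(w) − ∇F(w)‖² ≤ σ_g² for all w ∈ ℝ^d. Fix τ ≥ 1 and 0 < η_l ≤ 1/(6τL). Starting from w^{(0)} ∈ ℝ^d, for each round t = 0,…,T−1 define local full-batch gradient descent iterates w_i^{(t,0)} = w^{(t)}, w_i^{(t,k+1)} = w_i^{(t,k)} − η_l ∇F_i(w_i^{(t,k)}) for k = 0,…,τ−1, client updates Δ_i^{(t)} = w^{(t)} − w_i^{(t,τ)}, Δ̄^{(t)} = (1/M)Σ_{i=1}^M Δ_i^{(t)}, and w^{(t+1)} = w^{(t)} − η_g^{(t)} Δ̄^{(t)}, where the server step sizes satisfy η_g^{(t)} ≥ 1 and M η_g^{(t)} ‖Δ̄^{(t)}‖² ≤ Σ_{i=1}^M ‖Δ_i^{(t)}‖² for every t. Then min_{0 ≤ t ≤ T−1} ‖∇F(w^{(t)})‖² ≤ 8(F(w^{(0)})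 − F*) / (η_l τ Σ_{t=0}^{T−1} η_g^{(t)}) + 40 η_l² L² τ(τ−1) σ_g² + 24 η_l L τ σ_g². -/

import Mathlib

/-! Let `c = ηl τ`. While `6 τ L ηl ≤ 1`, the client update `Δ i` stays close to the single large
gradient step `c ∇F i`: `‖Δ i - c ∇F i‖² ≤ c² δ ‖∇F i‖²` with `δ = 9/25 ηl² L² τ (τ - 1) ≤ 1/100`.
By Jensen `Δ̄` is then close to `c ∇F`, so `⟪∇F, Δ̄⟫` is bounded below, while the condition on the
server step size trades the quadratic term `ηg² ‖Δ̄‖²` of the descent lemma for `ηg` times the mean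
of `‖Δ i‖²`. Both errors are multiples of the mean of `‖∇F i‖²`, which is `‖∇F‖²` plus the gradient
variance. Hence every round decreases `F` by at least `ηg c / 8 * (‖∇F‖² - ε)`, and telescoping
bounds the smallest `‖∇F‖²`. -/

open scoped NNReal Gradient InnerProductSpace

lemma norm_sq_le_two_mul_norm_sub_sq_add {E : Type*} [SeminormedAddCommGroup E] (v u : E) :
    ‖v‖ ^ 2 ≤ 2 * (‖v - u‖ ^ 2 + ‖u‖ ^ 2) := by
  calc ‖v‖ ^ 2 ≤ (‖v - u‖ + ‖u‖) ^ 2 := by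
        gcongr
        exact norm_le_norm_sub_add v u
    _ ≤ 2 * (‖v - u‖ ^ 2 + ‖u‖ ^ 2) := add_sq_le

section WeightedMean

variable {ι E : Type*} [Fintype ι] [NormedAddCommGroup E] [InnerProductSpace ℝ E] {p : ι → ℝ}

lemma sum_mul_norm_sq_eq_variance_add (hp : ∑ i, p i = 1) (v : ι → E) :
    ∑ i, p i * ‖v i‖ ^ 2 =
      ∑ i, p i * ‖v i - ∑ j, p j • v j‖ ^ 2 + ‖∑ i, p i • v i‖ ^ 2 := by
  set m := ∑ j, p j • v j with hm
  have hcross : ∑ i, p i * ⟪v i, m⟫_ℝ = ‖m‖ ^ 2 := by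
    simp_rw [← real_inner_smul_left, ← sum_inner, ← hm, real_inner_self_eq_norm_sq]
  have hconst : ∑ i, p i * ‖m‖ ^ 2 = ‖m‖ ^ 2 := by rw [← Finset.sum_mul, hp, one_mul]
  have hexpand (i : ι) : p i * ‖v i - m‖ ^ 2 =
      p i * ‖v i‖ ^ 2 - 2 * (p i * ⟪v i, m⟫_ℝ) + p i * ‖m‖ ^ 2 := by
    rw [norm_sub_sq_real]
    ring
  simp_rw [hexpand, Finset.sum_add_distrib, Finset.sum_sub_distrib, ← Finset.mul_sum, hcross,
    hconst]
  ring

lemma norm_sum_smul_sq_le (hp : p ∈ stdSimplex ℝ ι) (v : ι → E) :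
    ‖∑ i, p i • v i‖ ^ 2 ≤ ∑ i, p i * ‖v i‖ ^ 2 := by
  rw [sum_mul_norm_sq_eq_variance_add hp.2 v]
  exact le_add_of_nonneg_left <|
    Finset.sum_nonneg fun i _ => mul_nonneg (hp.1 i) (sq_nonneg _)

variable {c δ : ℝ} {v g : ι → E}

lemma norm_sum_smul_sub_smul_sq_le (hp : p ∈ stdSimplex ℝ ι)
    (hv : ∀ i, ‖v i - c • g i‖ ^ 2 ≤ c ^ 2 * (δ * ‖g i‖ ^ 2)) :
    ‖∑ i, p i • v i - c • ∑ i, p i • g i‖ ^ 2 ≤ c ^ 2 * (δ * ∑ i, p i * ‖g i‖ ^ 2) :=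
  calc ‖∑ i, p i • v i - c • ∑ i, p i • g i‖ ^ 2
      = ‖∑ i, p i • (v i - c • g i)‖ ^ 2 := by
        simp_rw [smul_sub, Finset.sum_sub_distrib, Finset.smul_sum, smul_comm c]
    _ ≤ ∑ i, p i * ‖v i - c • g i‖ ^ 2 := norm_sum_smul_sq_le hp _
    _ ≤ ∑ i, p i * (c ^ 2 * (δ * ‖g i‖ ^ 2)) :=
        Finset.sum_le_sum fun i _ => mul_le_mul_of_nonneg_left (hv i) (hp.1 i)
    _ = c ^ 2 * (δ * ∑ i, p i * ‖g i‖ ^ 2) := by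
        simp_rw [Finset.mul_sum]
        exact Finset.sum_congr rfl fun i _ => by ring

lemma sum_mul_norm_sq_le_of_norm_sub_smul_sq_le (hp : ∀ i, 0 ≤ p i)
    (hv : ∀ i, ‖v i - c • g i‖ ^ 2 ≤ c ^ 2 * (δ * ‖g i‖ ^ 2)) :
    ∑ i, p i * ‖v i‖ ^ 2 ≤ c ^ 2 * (2 * (1 + δ) * ∑ i, p i * ‖g i‖ ^ 2) := by
  have hbound (i : ι) : ‖v i‖ ^ 2 ≤ c ^ 2 * (2 * (1 + δ) * ‖g i‖ ^ 2) := by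
    have h := norm_sq_le_two_mul_norm_sub_sq_add (v i) (c • g i)
    have hc : ‖c • g i‖ ^ 2 = c ^ 2 * ‖g i‖ ^ 2 := by
      rw [norm_smul, mul_pow, Real.norm_eq_abs, sq_abs]
    linarith [hv i]
  calc ∑ i, p i * ‖v i‖ ^ 2 ≤ ∑ i, p i * (c ^ 2 * (2 * (1 + δ) * ‖g i‖ ^ 2)) :=
        Finset.sum_le_sum fun i _ => mul_le_mul_of_nonneg_left (hbound i) (hp i)
    _ = c ^ 2 * (2 * (1 + δ) * ∑ i, p i * ‖g i‖ ^ 2) := by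
        simp_rw [Finset.mul_sum]
        exact Finset.sum_congr rfl fun i _ => by ring

end WeightedMean

lemma exists_le_of_descent {φ a N : ℕ → ℝ} {c ε m : ℝ} {T : ℕ} (hT : 0 < T) (hc : 0 < c)
    (ha : ∀ t < T, 0 < a t) (hφ : ∀ t < T, φ (t + 1) ≤ φ t - c * a t * (N t - ε))
    (hm : m ≤ φ T) :
    ∃ t < T, N t ≤ (φ 0 - m) / (c * ∑ t ∈ Finset.range T, a t) + ε := by
  have hne : (Finset.range T).Nonempty := Finset.nonempty_range_iff.2 hT.ne'
  have hS : 0 < ∑ t ∈ Finset.range T, a t :=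
    Finset.sum_pos (fun t ht => ha t (Finset.mem_range.1 ht)) hne
  have htelescope : ∑ t ∈ Finset.range T, a t * (c * (N t - ε)) ≤ φ 0 - m :=
    calc ∑ t ∈ Finset.range T, a t * (c * (N t - ε))
        ≤ ∑ t ∈ Finset.range T, (φ t - φ (t + 1)) :=
          Finset.sum_le_sum fun t ht => by linarith [hφ t (Finset.mem_range.1 ht)]
      _ = φ 0 - φ T := Finset.sum_range_sub' φ T
      _ ≤ φ 0 - m := by gcongr
  have hmean : ∑ t ∈ Finset.range T, a t * (c * (N t - ε)) ≤
      ∑ t ∈ Finset.range T, a t * ((φ 0 - m) / ∑ t ∈ Finset.range T, a t) := by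
    rwa [← Finset.sum_mul, mul_div_cancel₀ _ hS.ne']
  obtain ⟨t, ht, hle⟩ := Finset.exists_le_of_sum_le hne hmean
  have htT := Finset.mem_range.1 ht
  refine ⟨t, htT, sub_le_iff_le_add.1 ?_⟩
  rw [mul_comm c, ← div_div, le_div_iff₀' hc]
  exact le_of_mul_le_mul_left hle (ha t htT)

section ClientUpdate

variable {E : Type*} [NormedAddCommGroup E] [NormedSpace ℝ E]

/-- The client update `Δ` of the paper: the displacement `x - x_τ` after `τ` steps
`x_{k+1} = x_k - η g(x_k)` of gradient descent from `x_0 = x`, for an arbitrary field `g` in place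
of the gradient. -/
def clientUpdate (η : ℝ) (g : E → E) (τ : ℕ) (x : E) : E :=
  x - (fun y => y - η • g y)^[τ] x

variable {η : ℝ} {g : E → E} {L : ℝ≥0} {k : ℕ}

lemma clientUpdate_zero (x : E) : clientUpdate η g 0 x = 0 := sub_self x

lemma clientUpdate_succ (x : E) :
    clientUpdate η g (k + 1) x =
      clientUpdate η g k x + η • g (x - clientUpdate η g k x) := by
  simp only [clientUpdate, Function.iterate_succ_apply', sub_sub_cancel]
  abel

lemma sub_eq_clientUpdate {u : ℕ → E} {τ : ℕ} (hu : ∀ k < τ, u (k + 1) = u k - η • g (u k)) :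
    u 0 - u τ = clientUpdate η g τ (u 0) := by
  induction τ with
  | zero => rw [clientUpdate_zero, sub_self]
  | succ τ ih =>
    rw [clientUpdate_succ, ← ih fun k hk => hu k (hk.trans τ.lt_succ_self), sub_sub_cancel,
      hu τ τ.lt_succ_self]
    abel

lemma norm_clientUpdate_le (hg : LipschitzWith L g) (hη : 0 ≤ η) (hk : 6 * k * L * η ≤ 1)
    (x : E) : ‖clientUpdate η g k x‖ ≤ 6 / 5 * (k * η) * ‖g x‖ := by
  induction k with
  | zero => simp [clientUpdate_zero]
  | succ k ih =>
    rw [clientUpdate_succ]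
    set d := clientUpdate η g k x
    push_cast at hk ⊢
    have hLη : 0 ≤ (L : ℝ) * η := by positivity
    have hd : ‖d‖ ≤ 6 / 5 * (k * η) * ‖g x‖ := ih (by linarith)
    have hgrad : ‖g (x - d)‖ ≤ 6 / 5 * ‖g x‖ :=
      calc ‖g (x - d)‖ ≤ ‖g x‖ + ‖g (x - d) - g x‖ := norm_le_norm_add_norm_sub' _ _
        _ ≤ ‖g x‖ + L * ‖d‖ := by
            gcongr
            simpa using hg.norm_sub_le (x - d) x
        _ ≤ ‖g x‖ + L * (6 / 5 * (k * η) * ‖g x‖) := by gcongr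
        _ = (1 + 6 * k * L * η / 5) * ‖g x‖ := by ring
        _ ≤ 6 / 5 * ‖g x‖ := by
            gcongr
            linarith
    calc ‖d + η • g (x - d)‖ ≤ ‖d‖ + η * ‖g (x - d)‖ := by
          simpa [norm_smul, abs_of_nonneg hη] using norm_add_le d (η • g (x - d))
      _ ≤ 6 / 5 * (k * η) * ‖g x‖ + η * (6 / 5 * ‖g x‖) := by gcongr
      _ = 6 / 5 * ((k + 1) * η) * ‖g x‖ := by ring

lemma norm_clientUpdate_sub_smul_le (hg : LipschitzWith L g) (hη : 0 ≤ η)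
    (hk : 6 * k * L * η ≤ 1) (x : E) :
    ‖clientUpdate η g k x - (k * η) • g x‖ ≤ 3 / 5 * η ^ 2 * L * (k * (k - 1)) * ‖g x‖ := by
  induction k with
  | zero => simp [clientUpdate_zero]
  | succ k ih =>
    have hLη : 0 ≤ (L : ℝ) * η := by positivity
    have hk' : 6 * k * L * η ≤ 1 := by
      push_cast at hk
      linarith
    have hd := norm_clientUpdate_le hg hη hk' x
    have ih := ih hk'
    rw [clientUpdate_succ]
    set d := clientUpdate η g k x
    push_cast
    have hgrad : ‖g (x - d) - g x‖ ≤ L * ‖d‖ := by simpa using hg.norm_sub_le (x - d) x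
    calc ‖d + η • g (x - d) - ((k + 1 : ℝ) * η) • g x‖
        = ‖(d - (k * η) • g x) + η • (g (x - d) - g x)‖ := by
          congr 1
          module
      _ ≤ ‖d - (k * η) • g x‖ + η * ‖g (x - d) - g x‖ := by
          simpa only [norm_smul, Real.norm_of_nonneg hη] using
            norm_add_le (d - (k * η) • g x) (η • (g (x - d) - g x))
      _ ≤ 3 / 5 * η ^ 2 * L * (k * (k - 1)) * ‖g x‖ + η * (L * (6 / 5 * (k * η) * ‖g x‖)) := by
          gcongr
          exact hgrad.trans (by gcongr)
      _ = 3 / 5 * η ^ 2 * L * ((k + 1) * (k + 1 - 1)) * ‖g x‖ := by ring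

lemma norm_clientUpdate_sub_smul_sq_le (hg : LipschitzWith L g) (hη : 0 ≤ η)
    (hk : 6 * k * L * η ≤ 1) (x : E) :
    ‖clientUpdate η g k x - (k * η) • g x‖ ^ 2 ≤
      (k * η) ^ 2 * (9 / 25 * (η ^ 2 * L ^ 2 * k * (k - 1)) * ‖g x‖ ^ 2) := by
  have hk1 : (k : ℝ) ^ 2 * (k - 1) ^ 2 ≤ k ^ 2 * (k * (k - 1)) := by
    cases k with
    | zero => simp
    | succ k =>
      push_cast
      gcongr
      nlinarith [k.cast_nonneg (α := ℝ)]
  calc ‖clientUpdate η g k x - (k * η) • g x‖ ^ 2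
      ≤ (3 / 5 * η ^ 2 * L * (k * (k - 1)) * ‖g x‖) ^ 2 := by
        gcongr
        exact norm_clientUpdate_sub_smul_le hg hη hk x
    _ = 9 / 25 * η ^ 4 * L ^ 2 * ‖g x‖ ^ 2 * (k ^ 2 * (k - 1) ^ 2) := by ring
    _ ≤ 9 / 25 * η ^ 4 * L ^ 2 * ‖g x‖ ^ 2 * (k ^ 2 * (k * (k - 1))) := by gcongr
    _ = (k * η) ^ 2 * (9 / 25 * (η ^ 2 * L ^ 2 * k * (k - 1)) * ‖g x‖ ^ 2) := by ring

end ClientUpdate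

section Smooth

variable {ι E : Type*} [NormedAddCommGroup E] [InnerProductSpace ℝ E] [CompleteSpace E]

/-- `L`-smoothness: differentiability with `L`-Lipschitz gradient. -/
structure LSmoothWith (L : ℝ≥0) (f : E → ℝ) : Prop where
  differentiable : Differentiable ℝ f
  lipschitzWith_gradient : LipschitzWith L (∇ f)

variable {L : ℝ≥0}

lemma LSmoothWith.le_add_inner_add {f : E → ℝ} (hf : LSmoothWith L f) (x v : E) :
    f (x + v) ≤ f x + ⟪∇ f x, v⟫_ℝ + L / 2 * ‖v‖ ^ 2 := by
  have hline (s : ℝ) : HasDerivAt (fun s : ℝ => f (x + s • v)) ⟪∇ f (x + s • v), v⟫_ℝ s := by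
    have hpath : HasDerivAt (fun s : ℝ => x + s • v) v s := by
      simpa using ((hasDerivAt_id s).smul_const v).const_add x
    exact ((hf.differentiable _).hasGradientAt.hasFDerivAt.comp_hasDerivAt s hpath).congr_deriv
      InnerProductSpace.toDual_apply_apply
  have hbound (s : ℝ) :
      HasDerivAt (fun s : ℝ => f x + s * ⟪∇ f x, v⟫_ℝ + L / 2 * s ^ 2 * ‖v‖ ^ 2)
        (⟪∇ f x, v⟫_ℝ + L * s * ‖v‖ ^ 2) s := by
    have hlinear := ((hasDerivAt_id s).mul_const ⟪∇ f x, v⟫_ℝ).const_add (f x)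
    have hquadratic := ((hasDerivAt_pow 2 s).const_mul (L / 2 : ℝ)).mul_const (‖v‖ ^ 2)
    refine (hlinear.add hquadratic).congr_deriv ?_
    push_cast
    ring
  have hderiv (s : ℝ) (hs : 0 ≤ s) :
      ⟪∇ f (x + s • v), v⟫_ℝ ≤ ⟪∇ f x, v⟫_ℝ + L * s * ‖v‖ ^ 2 := by
    rw [← sub_le_iff_le_add', ← inner_sub_left]
    calc ⟪∇ f (x + s • v) - ∇ f x, v⟫_ℝ
        ≤ ‖∇ f (x + s • v) - ∇ f x‖ * ‖v‖ := real_inner_le_norm _ _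
      _ ≤ L * ‖x + s • v - x‖ * ‖v‖ := by
          gcongr
          exact hf.lipschitzWith_gradient.norm_sub_le _ _
      _ = L * s * ‖v‖ ^ 2 := by
          rw [add_sub_cancel_left, norm_smul, Real.norm_of_nonneg hs]
          ring
  simpa using image_le_of_deriv_right_le_deriv_boundary
    (fun s _ => (hline s).continuousAt.continuousWithinAt)
    (fun s _ => (hline s).hasDerivWithinAt) (by simp)
    (fun s _ => (hbound s).continuousAt.continuousWithinAt)
    (fun s _ => (hbound s).hasDerivWithinAt) (fun s hs => hderiv s hs.1)
    (Set.right_mem_Icc.2 zero_le_one)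

lemma LSmoothWith.apply_sub_smul_le {f : E → ℝ} (hf : LSmoothWith L f) {x v : E} {a c B Q : ℝ}
    (ha : 0 ≤ a) (hc : 0 < c) (hv : ‖v - c • ∇ f x‖ ^ 2 ≤ c ^ 2 * B)
    (hQ : a * ‖v‖ ^ 2 ≤ c ^ 2 * Q) :
    f (x - a • v) ≤ f x - a * c / 2 * (‖∇ f x‖ ^ 2 - B - c * L * Q) := by
  have hinner : c / 2 * (‖∇ f x‖ ^ 2 - B) ≤ ⟪∇ f x, v⟫_ℝ := by
    rw [norm_sub_sq_real, norm_smul, mul_pow, Real.norm_of_nonneg hc.le, inner_smul_right,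
      real_inner_comm] at hv
    refine le_of_mul_le_mul_left ?_ hc
    linarith [sq_nonneg ‖v‖]
  calc f (x - a • v) = f (x + -(a • v)) := by rw [sub_eq_add_neg]
    _ ≤ f x + ⟪∇ f x, -(a • v)⟫_ℝ + L / 2 * ‖-(a • v)‖ ^ 2 := hf.le_add_inner_add x _
    _ = f x - a * ⟪∇ f x, v⟫_ℝ + a * (L / 2) * (a * ‖v‖ ^ 2) := by
        rw [inner_neg_right, inner_smul_right, norm_neg, norm_smul, Real.norm_of_nonneg ha]
        ring
    _ ≤ f x - a * (c / 2 * (‖∇ f x‖ ^ 2 - B)) + a * (L / 2) * (c ^ 2 * Q) := by gcongr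
    _ = f x - a * c / 2 * (‖∇ f x‖ ^ 2 - B - c * L * Q) := by ring

variable [Fintype ι]

/-- The global objective of federated learning with client objectives `F i`, where client `i` has
weight `p i`; the uniform weights `1 / M` give the mean. -/
def globalObjective (p : ι → ℝ) (F : ι → E → ℝ) (x : E) : ℝ := ∑ i, p i * F i x

variable {p : ι → ℝ} {F : ι → E → ℝ}

lemma hasGradientAt_globalObjective {x : E} (hF : ∀ i, DifferentiableAt ℝ (F i) x) :
    HasGradientAt (globalObjective p F) (∑ i, p i • ∇ (F i) x) x := by
  rw [hasGradientAt_iff_hasFDerivAt, map_sum]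
  refine HasFDerivAt.fun_sum fun i _ => ?_
  simpa using (hF i).hasGradientAt.hasFDerivAt.const_mul (p i)

lemma gradient_globalObjective (hF : ∀ i, LSmoothWith L (F i)) (x : E) :
    ∇ (globalObjective p F) x = ∑ i, p i • ∇ (F i) x :=
  (hasGradientAt_globalObjective fun i => (hF i).differentiable x).gradient

lemma LSmoothWith.globalObjective (hp : p ∈ stdSimplex ℝ ι) (hF : ∀ i, LSmoothWith L (F i)) :
    LSmoothWith L (globalObjective p F) where
  differentiable x :=
    (hasGradientAt_globalObjective fun i => (hF i).differentiable x).differentiableAt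
  lipschitzWith_gradient := by
    refine LipschitzWith.of_dist_le_mul fun x y => ?_
    rw [dist_eq_norm, dist_eq_norm, gradient_globalObjective hF, gradient_globalObjective hF,
      ← Finset.sum_sub_distrib]
    calc ‖∑ i, (p i • ∇ (F i) x - p i • ∇ (F i) y)‖
        ≤ ∑ i, p i * (L * ‖x - y‖) := norm_sum_le_of_le _ fun i _ => by
          rw [← smul_sub, norm_smul, Real.norm_of_nonneg (hp.1 i)]
          exact mul_le_mul_of_nonneg_left
            ((hF i).lipschitzWith_gradient.norm_sub_le x y) (hp.1 i)
      _ = L * ‖x - y‖ := by rw [← Finset.sum_mul, hp.2, one_mul]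

lemma globalObjective_sub_smul_sum_le (hp : p ∈ stdSimplex ℝ ι)
    (hF : ∀ i, LSmoothWith L (F i)) {x : E} {v : ι → E} {a c δ : ℝ} (ha : 0 ≤ a) (hc : 0 < c)
    (hv : ∀ i, ‖v i - c • ∇ (F i) x‖ ^ 2 ≤ c ^ 2 * (δ * ‖∇ (F i) x‖ ^ 2))
    (hstep : a * ‖∑ i, p i • v i‖ ^ 2 ≤ ∑ i, p i * ‖v i‖ ^ 2) :
    globalObjective p F (x - a • ∑ i, p i • v i) ≤ globalObjective p F x -
      a * c / 2 * (‖∇ (globalObjective p F) x‖ ^ 2 -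
        (δ + 2 * (c * L) * (1 + δ)) * ∑ i, p i * ‖∇ (F i) x‖ ^ 2) := by
  have hmean := norm_sum_smul_sub_smul_sq_le hp hv
  rw [← gradient_globalObjective hF] at hmean
  refine ((LSmoothWith.globalObjective hp hF).apply_sub_smul_le ha hc hmean
    (hstep.trans (sum_mul_norm_sq_le_of_norm_sub_smul_sq_le hp.1 hv))).trans_eq ?_
  ring

-- The coefficient of `P` is `δ + 2 c L (1 + δ)` for `δ = 9/25 z` and `y = c L`; here
-- `z = ηl² L² τ (τ - 1)`.
lemma descent_gain_ge {N P s y z : ℝ} (hN : 0 ≤ N) (hs : 0 ≤ s) (hP : P ≤ s + N) (hy : 0 ≤ y)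
    (hy6 : y ≤ 1 / 6) (hz : 0 ≤ z) (hzy : z ≤ y ^ 2) :
    (N - (40 * z + 24 * y) * s) / 4 ≤ N - (9 / 25 * z + 2 * y * (1 + 9 / 25 * z)) * P := by
  have hz36 : z ≤ 1 / 36 := by linarith [pow_le_pow_left₀ hy hy6 2]
  set κ := 9 / 25 * z + 2 * y * (1 + 9 / 25 * z) with hκ
  have hκ_le : κ ≤ 3 / 4 := by nlinarith
  have hκ_noise : κ ≤ 10 * z + 6 * y := by nlinarith
  calc (N - (40 * z + 24 * y) * s) / 4 = N - (3 / 4 * N + (10 * z + 6 * y) * s) := by ring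
    _ ≤ N - (κ * N + κ * s) := by gcongr
    _ = N - κ * (s + N) := by ring
    _ ≤ N - κ * P := by gcongr

lemma fedexp_round_le (hp : p ∈ stdSimplex ℝ ι) (hF : ∀ i, LSmoothWith L (F i)) {x : E}
    {η a σ : ℝ} {τ : ℕ} (hτ : 1 ≤ τ) (hη : 0 < η) (hηL : 6 * τ * L * η ≤ 1) (ha : 0 ≤ a)
    (hσ : ∑ i, p i * ‖∇ (F i) x - ∇ (globalObjective p F) x‖ ^ 2 ≤ σ ^ 2)
    (hstep : a * ‖∑ i, p i • clientUpdate η (∇ (F i)) τ x‖ ^ 2 ≤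
      ∑ i, p i * ‖clientUpdate η (∇ (F i)) τ x‖ ^ 2) :
    globalObjective p F (x - a • ∑ i, p i • clientUpdate η (∇ (F i)) τ x) ≤
      globalObjective p F x - η * τ / 8 * a * (‖∇ (globalObjective p F) x‖ ^ 2 -
        (40 * η ^ 2 * L ^ 2 * τ * (τ - 1) * σ ^ 2 + 24 * η * L * τ * σ ^ 2)) := by
  have hc : 0 < τ * η := by positivity
  have hdescent := globalObjective_sub_smul_sum_le hp hF ha hc
    (fun i => norm_clientUpdate_sub_smul_sq_le (hF i).lipschitzWith_gradient hη.le hηL x) hstep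
  have hbias := sum_mul_norm_sq_eq_variance_add hp.2 fun i => ∇ (F i) x
  rw [← gradient_globalObjective hF] at hbias
  refine hdescent.trans ?_
  have hτ' : (1 : ℝ) ≤ τ := by exact_mod_cast hτ
  have hdrift : η ^ 2 * L ^ 2 * τ * (τ - 1) ≤ (τ * η * L) ^ 2 := by
    have hnonneg : 0 ≤ η ^ 2 * L ^ 2 * τ := by positivity
    linarith
  have hgain := descent_gain_ge (sq_nonneg _) (sq_nonneg σ)
    (hbias.trans_le (add_le_add_left hσ _)) (by positivity : 0 ≤ τ * η * L) (by linarith)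
    (mul_nonneg (by positivity) (sub_nonneg.2 hτ')) hdrift
  refine (sub_le_sub_left (mul_le_mul_of_nonneg_left hgain (by positivity)) _).trans_eq ?_
  ring

theorem fedexp_nonconvex_convergence_general (hp : p ∈ stdSimplex ℝ ι)
    (hF : ∀ i, LSmoothWith L (F i)) {ηl σg Fstar : ℝ} {τ T : ℕ} (hτ : 1 ≤ τ) (hT : 0 < T)
    (hFstar : Fstar ∈ lowerBounds (Set.range (globalObjective p F)))
    (hσg : ∀ x, ∑ i, p i * ‖∇ (F i) x - ∇ (globalObjective p F) x‖ ^ 2 ≤ σg ^ 2)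
    (hηl : 0 < ηl) (hηlL : 6 * τ * L * ηl ≤ 1) {w : ℕ → E} {ηg : ℕ → ℝ}
    (hηg : ∀ t < T, 0 < ηg t)
    (hηgub : ∀ t < T, ηg t * ‖∑ i, p i • clientUpdate ηl (∇ (F i)) τ (w t)‖ ^ 2 ≤
      ∑ i, p i * ‖clientUpdate ηl (∇ (F i)) τ (w t)‖ ^ 2)
    (hw : ∀ t < T, w (t + 1) = w t - ηg t • ∑ i, p i • clientUpdate ηl (∇ (F i)) τ (w t)) :
    ∃ t < T, ‖∇ (globalObjective p F) (w t)‖ ^ 2 ≤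
      8 * (globalObjective p F (w 0) - Fstar) / (ηl * τ * ∑ t ∈ Finset.range T, ηg t)
        + 40 * ηl ^ 2 * L ^ 2 * τ * (τ - 1) * σg ^ 2
        + 24 * ηl * L * τ * σg ^ 2 := by
  have hround (t : ℕ) (ht : t < T) := fedexp_round_le hp hF hτ hηl hηlL (hηg t ht).le
    (hσg (w t)) (hηgub t ht)
  simp_rw +contextual [← hw] at hround
  obtain ⟨t, ht, hle⟩ := exists_le_of_descent (φ := fun t => globalObjective p F (w t)) hT
    (by positivity) hηg hround (hFstar ⟨w T, rfl⟩)
  refine ⟨t, ht, hle.trans_eq ?_⟩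
  rw [← add_assoc, div_mul_eq_mul_div, div_div_eq_mul_div, mul_comm _ (8 : ℝ)]

end Smooth

/-- Theorem 2: convergence of FedExP for (possibly non-convex) smooth objectives,
with explicit constants. -/
theorem fedexp_nonconvex_convergence {d M : ℕ} (hM : 0 < M)
    (F : Fin M → EuclideanSpace ℝ (Fin d) → ℝ)
    (Fbar : EuclideanSpace ℝ (Fin d) → ℝ)
    (hFbar : ∀ w, Fbar w = (1 / (M : ℝ)) * ∑ i, F i w)
    (L ηl σg Fstar : ℝ) (τ T : ℕ) (hτ : 1 ≤ τ) (hT : 0 < T)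
    (hdiff : ∀ i, Differentiable ℝ (F i))
    (hsmooth : ∀ i, ∀ w w' : EuclideanSpace ℝ (Fin d),
      ‖gradient (F i) w - gradient (F i) w'‖ ≤ L * ‖w - w'‖)
    (hFstar : IsGLB (Set.range Fbar) Fstar)
    (hσg : ∀ w : EuclideanSpace ℝ (Fin d),
      (1 / (M : ℝ)) * ∑ i, ‖gradient (F i) w - gradient Fbar w‖ ^ 2 ≤ σg ^ 2)
    (hηl : 0 < ηl) (hηlL : ηl ≤ 1 / (6 * τ * L))
    (w : ℕ → EuclideanSpace ℝ (Fin d))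
    (wloc : ℕ → Fin M → ℕ → EuclideanSpace ℝ (Fin d))
    (hwloc0 : ∀ t < T, ∀ i, wloc t i 0 = w t)
    (hwlocrec : ∀ t < T, ∀ i, ∀ k < τ,
      wloc t i (k + 1) = wloc t i k - ηl • gradient (F i) (wloc t i k))
    (Δ : ℕ → Fin M → EuclideanSpace ℝ (Fin d))
    (hΔ : ∀ t < T, ∀ i, Δ t i = w t - wloc t i τ)
    (Δbar : ℕ → EuclideanSpace ℝ (Fin d))
    (hΔbar : ∀ t < T, Δbar t = (1 / (M : ℝ)) • ∑ i, Δ t i)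
    (ηg : ℕ → ℝ) (hηg1 : ∀ t < T, 1 ≤ ηg t)
    (hηgub : ∀ t < T, (M : ℝ) * ηg t * ‖Δbar t‖ ^ 2 ≤ ∑ i, ‖Δ t i‖ ^ 2)
    (hwrec : ∀ t < T, w (t + 1) = w t - ηg t • Δbar t) :
    ∃ t < T, ‖gradient Fbar (w t)‖ ^ 2 ≤
      8 * (Fbar (w 0) - Fstar) / (ηl * τ * ∑ t ∈ Finset.range T, ηg t)
        + 40 * ηl ^ 2 * L ^ 2 * τ * (τ - 1) * σg ^ 2
        + 24 * ηl * L * τ * σg ^ 2 := by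
  have hM' : (0 : ℝ) < M := Nat.cast_pos.2 hM
  have hp : (fun _ => 1 / (M : ℝ)) ∈ stdSimplex ℝ (Fin M) :=
    ⟨fun _ => by positivity, by simp [hM'.ne']⟩
  have hden : 0 < 6 * τ * L := one_div_pos.1 (hηl.trans_le hηlL)
  have hL : 0 ≤ L := (pos_of_mul_pos_right hden (by positivity)).le
  lift L to NNReal using hL
  have hF (i : Fin M) : LSmoothWith L (F i) := ⟨hdiff i, .of_dist_le_mul fun x y => by
    simpa only [dist_eq_norm] using hsmooth i x y⟩
  obtain rfl : Fbar = globalObjective (fun _ => 1 / (M : ℝ)) F :=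
    funext fun x => (hFbar x).trans (Finset.mul_sum ..)
  have hΔclient (t : ℕ) (ht : t < T) (i : Fin M) :
      Δ t i = clientUpdate ηl (gradient (F i)) τ (w t) := by
    rw [hΔ t ht i, ← hwloc0 t ht i, sub_eq_clientUpdate (hwlocrec t ht i)]
  refine fedexp_nonconvex_convergence_general hp hF hτ hT hFstar.1
    (fun x => (Finset.mul_sum ..).symm.trans_le (hσg x)) hηl ((le_div_iff₀' hden).1 hηlL)
    (fun t ht => one_pos.trans_le (hηg1 t ht)) (fun t ht => ?_) fun t ht => ?_
  · simp_rw [← hΔclient t ht, ← Finset.smul_sum, ← Finset.mul_sum, ← hΔbar t ht]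
    rw [one_div, le_inv_mul_iff₀ hM', ← mul_assoc]
    exact hηgub t ht
  · simp_rw [← hΔclient t ht, ← Finset.smul_sum, ← hΔbar t ht]
    exact hwrec t ht
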